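/- Define α := inf { ∫_Ω min{ (1/2) a |F + C|², (1/2) b |F + D|² } dx : (v, F) an admissible pair }. Then there exist a sequence of admissible pairs (u^k, E^k), an admissible pair (u, E), measurable functions χ_a^k, χ_b^k : Ω → {0,1} with χ_a^k + χ_b^k = 1 a.e. in Ω, and measurable functions χ_a, χ_b : Ω → [0,1] with χ_a + χ_b = 1 a.e. in Ω, such that: (i) ∫_Ω min{ (1/2) a |E^k + C|², (1/2) b |E^k + D|² } dx → α as k → ∞; (ii) u^k → u weakly in L²(Ω; ℝⁿ) and E^k → E weakly in L²(Ω; Sym(n)); (iii) χ_a^k → χ_a and χ_b^k → χ_b weak* in L^∞(Ω); (iv) ∫_Ω [ (1/2) χ_a^k a |E^k + C|² + (1/2) χ_b^k b |E^k + D|² ] dx → α; (v) for every k and every admissible pair (w, G): ∫_Ω [ (1/2) χ_a^k a |E^k + C|² + (1/2) χ_b^k b |E^k + D|² ] dx ≤ ∫_Ω [ (1/2) χ_a^k a |G + C|² + (1/2) χ_b^k b |G + D|² ] dx. -/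

import Mathlib

open MeasureTheory Filter Topology

noncomputable section

abbrev RV (n : ℕ) := Fin n → ℝ
abbrev Mat (n : ℕ) := Matrix (Fin n) (Fin n) ℝ
abbrev MField (n : ℕ) := RV n → Mat n
abbrev VField (n : ℕ) := RV n → RV n

/-- Frobenius inner product of matrices: `P·Q = ∑ᵢⱼ Pᵢⱼ Qᵢⱼ`. -/
def mdot {n : ℕ} (P Q : Mat n) : ℝ := ∑ i, ∑ j, P i j * Q i j

/-- A matrix field takes symmetric values a.e. on `s`. -/
def SymOn {n : ℕ} (E : MField n) (s : Set (RV n)) : Prop :=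
  ∀ᵐ x ∂(volume : Measure (RV n)), x ∈ s → ∀ i j, E x i j = E x j i

/-- Matrix field in L² on `s`: componentwise measurable and `|E|²` integrable on `s`. -/
def L2MOn {n : ℕ} (E : MField n) (s : Set (RV n)) : Prop :=
  (∀ i j, Measurable fun x => E x i j) ∧
    IntegrableOn (fun x => mdot (E x) (E x)) s volume

/-- Vector field in L² on `s`. -/
def L2VOn {n : ℕ} (u : VField n) (s : Set (RV n)) : Prop :=
  (∀ i, Measurable fun x => u x i) ∧
    IntegrableOn (fun x => ∑ i, u x i * u x i) s volume

/-- Scalar function in L∞ on `s`. -/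
def LinfROn {n : ℕ} (f : RV n → ℝ) (s : Set (RV n)) : Prop :=
  Measurable f ∧ ∃ M : ℝ, ∀ᵐ x ∂(volume : Measure (RV n)), x ∈ s → |f x| ≤ M

/-- Matrix field in L∞ on `s`. -/
def LinfMOn {n : ℕ} (F : MField n) (s : Set (RV n)) : Prop :=
  (∀ i j, Measurable fun x => F x i j) ∧
    ∃ M : ℝ, ∀ᵐ x ∂(volume : Measure (RV n)), x ∈ s → ∀ i j, |F x i j| ≤ M

/-- `E` is the weak symmetrized gradient of `u`:
for all `i j` and every test function `φ ∈ C_c^∞(ℝⁿ)`,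
`∫ Eᵢⱼ φ = -(1/2) ∫ (uᵢ ∂ⱼφ + uⱼ ∂ᵢφ)`. -/
def IsSymGrad {n : ℕ} (u : VField n) (E : MField n) : Prop :=
  ∀ i j, ∀ φ : RV n → ℝ, ContDiff ℝ (⊤ : ℕ∞) φ → HasCompactSupport φ →
    ∫ x, E x i j * φ x =
      -(1 / 2) * ∫ x, (u x i * fderiv ℝ φ x (Pi.single j 1) +
        u x j * fderiv ℝ φ x (Pi.single i 1))

/-- Admissible pair: the encoding of `v ∈ H¹₀(Ω;ℝⁿ)` together with its symmetrized
gradient `ε(v)`. -/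
structure AdmPair (n : ℕ) (Ω : Set (RV n)) where
  u : VField n
  E : MField n
  hu : L2VOn u Set.univ
  hE : L2MOn E Set.univ
  hsym : SymOn E Set.univ
  huz : ∀ᵐ x ∂(volume : Measure (RV n)), x ∉ Ω → u x = 0
  hEz : ∀ᵐ x ∂(volume : Measure (RV n)), x ∉ Ω → E x = 0
  hgrad : IsSymGrad u E

/-- Weak convergence in `L²(s; Sym(n))`. -/
def WeakL2M {n : ℕ} (Ek : ℕ → MField n) (E : MField n) (s : Set (RV n)) : Prop :=
  ∀ G : MField n, L2MOn G s →
    Tendsto (fun k => ∫ x in s, mdot (Ek k x) (G x)) atTop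
      (𝓝 (∫ x in s, mdot (E x) (G x)))

/-- Weak convergence in `L²(s; ℝⁿ)`. -/
def WeakL2V {n : ℕ} (uk : ℕ → VField n) (u : VField n) (s : Set (RV n)) : Prop :=
  ∀ g : VField n, L2VOn g s →
    Tendsto (fun k => ∫ x in s, ∑ i, uk k x i * g x i) atTop
      (𝓝 (∫ x in s, ∑ i, u x i * g x i))

/-- Weak* convergence in `L∞(s)`. -/
def WeakStarLinf {n : ℕ} (fk : ℕ → RV n → ℝ) (f : RV n → ℝ) (s : Set (RV n)) : Prop :=
  ∀ h : RV n → ℝ, IntegrableOn h s volume →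
    Tendsto (fun k => ∫ x in s, fk k x * h x) atTop (𝓝 (∫ x in s, f x * h x))

/-- Weak convergence in `L¹(s)`. -/
def WeakL1 {n : ℕ} (fk : ℕ → RV n → ℝ) (f : RV n → ℝ) (s : Set (RV n)) : Prop :=
  ∀ g : RV n → ℝ, Measurable g →
    (∃ M : ℝ, ∀ᵐ x ∂(volume : Measure (RV n)), x ∈ s → |g x| ≤ M) →
    Tendsto (fun k => ∫ x in s, fk k x * g x) atTop (𝓝 (∫ x in s, f x * g x))

/-- Uniform integrability of a family on `s`. -/
def UnifIntOn {n : ℕ} (fk : ℕ → RV n → ℝ) (s : Set (RV n)) : Prop :=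
  ∀ ε : ℝ, 0 < ε → ∃ η : ℝ, 0 < η ∧ ∀ A : Set (RV n), MeasurableSet A → A ⊆ s →
    volume A < ENNReal.ofReal η → ∀ k, ∫ x in A, |fk k x| < ε

/-- The double-well integrand `min{½a|F+C|², ½b|F+D|²}`. -/
def phaseMin {n : ℕ} (a b : RV n → ℝ) (C D : MField n) (F : MField n) (x : RV n) : ℝ :=
  min (1 / 2 * a x * mdot (F x + C x) (F x + C x))
      (1 / 2 * b x * mdot (F x + D x) (F x + D x))

/-- The nonconvex energy. -/
def Jfun {n : ℕ} (Ω : Set (RV n)) (a b : RV n → ℝ) (C D : MField n) (F : MField n) : ℝ :=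
  ∫ x in Ω, phaseMin a b C D F x

/-- The infimum `α` of the nonconvex problem over admissible pairs. -/
def alphaInf {n : ℕ} (Ω : Set (RV n)) (a b : RV n → ℝ) (C D : MField n) : ℝ :=
  sInf { r : ℝ | ∃ P : AdmPair n Ω, r = Jfun Ω a b C D P.E }

/-- The convexified energy `∫ [½χₐa|F+C|² + ½χᵦb|F+D|²]`. -/
def Jconv {n : ℕ} (Ω : Set (RV n)) (χa χb a b : RV n → ℝ) (C D : MField n)
    (F : MField n) : ℝ :=
  ∫ x in Ω, (1 / 2 * χa x * a x * mdot (F x + C x) (F x + C x)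
    + 1 / 2 * χb x * b x * mdot (F x + D x) (F x + D x))

/-- `A⁺ = (aC + bD)/2`. -/
def Aplus {n : ℕ} (a b : RV n → ℝ) (C D : MField n) : MField n :=
  fun x => (2 : ℝ)⁻¹ • (a x • C x + b x • D x)

/-- `A⁻ = (bD − aC)/2`. -/
def Aminus {n : ℕ} (a b : RV n → ℝ) (C D : MField n) : MField n :=
  fun x => (2 : ℝ)⁻¹ • (b x • D x - a x • C x)

/-- The integrand on `Ω \ Ω₀`:
`(ab(C−D)/(b−a))·F + ((bD−aC)/(b−a))·q + ab(|C|²−|D|²)/(2(b−a)) − t·ab|C−D|²/(2(b−a))`. -/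
def Goff {n : ℕ} (a b : RV n → ℝ) (C D : MField n) (F q : MField n) (t : RV n → ℝ)
    (x : RV n) : ℝ :=
  a x * b x / (b x - a x) * mdot (C x - D x) (F x) +
    (b x - a x)⁻¹ * mdot (b x • D x - a x • C x) (q x) +
    a x * b x * (mdot (C x) (C x) - mdot (D x) (D x)) / (2 * (b x - a x)) -
    t x * (a x * b x * mdot (C x - D x) (C x - D x) / (2 * (b x - a x)))

/-- `Ω₀ = {x ∈ Ω : a(x) = b(x)}`. -/
def Omega0 {n : ℕ} (Ω : Set (RV n)) (a b : RV n → ℝ) : Set (RV n) :=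
  {x ∈ Ω | a x = b x}



lemma aux_inner {n : ℕ} {f g : RV n → ℝ} (hf : MemLp f 2 volume) (hg : MemLp g 2 volume) :
    inner ℝ (hf.toLp f) (hg.toLp g) = ∫ x, f x * g x := by
  rw [L2.inner_def]
  apply integral_congr_ae
  filter_upwards [hf.coeFn_toLp, hg.coeFn_toLp] with x h1 h2
  rw [h1, h2]
  simp [mul_comm]

lemma aux_norm_sq {n : ℕ} {f : RV n → ℝ} (hf : MemLp f 2 volume) :
    ‖hf.toLp f‖ ^ 2 = ∫ x, f x * f x := by
  rw [← aux_inner hf hf, real_inner_self_eq_norm_sq]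

lemma weak_compact {n : ℕ} (f : ℕ → RV n → ℝ) (hf : ∀ k, MemLp (f k) 2 volume) (M : ℝ)
    (hM : ∀ k, ∫ x, f k x * f k x ≤ M) :
    ∃ φ : ℕ → ℕ, StrictMono φ ∧ ∃ g : RV n → ℝ, Measurable g ∧ MemLp g 2 volume ∧
      ∀ h : RV n → ℝ, MemLp h 2 volume →
        Tendsto (fun k => ∫ x, f (φ k) x * h x) atTop (𝓝 (∫ x, g x * h x)) := by
  have : Fact ((2 : ENNReal) ≠ ⊤) := ⟨by norm_num⟩
  let H := Lp ℝ 2 (volume : Measure (RV n))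
  have hsep : SecondCountableTopology H := inferInstance
  let F : ℕ → H := fun k => (hf k).toLp (f k)
  let T : ℕ → WeakDual ℝ H := fun k => StrongDual.toWeakDual (InnerProductSpace.toDual ℝ H (F k))
  have hT : ∀ k, T k ∈ (WeakDual.toStrongDual ⁻¹' Metric.closedBall (0 : StrongDual ℝ H) (√M)) := by
    intro k
    simp only [Set.mem_preimage, mem_closedBall_zero_iff]
    change ‖InnerProductSpace.toDual ℝ H (F k)‖ ≤ _
    rw [LinearIsometryEquiv.norm_map]
    apply Real.le_sqrt_of_sq_le
    rw [aux_norm_sq (hf k)]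
    exact hM k
  obtain ⟨S, _, φ, hφ, hlim⟩ := WeakDual.isSeqCompact_closedBall ℝ H 0 (√M) hT
  refine ⟨φ, hφ, ?_⟩
  let G : H := (InnerProductSpace.toDual ℝ H).symm (WeakDual.toStrongDual S)
  have hGm : MemLp (G : RV n → ℝ) 2 volume := Lp.memLp G
  have hsm := hGm.1
  refine ⟨hsm.aemeasurable.mk _, hsm.aemeasurable.measurable_mk, hGm.ae_eq hsm.aemeasurable.ae_eq_mk, ?_⟩
  intro h hh
  have h1 := (WeakDual.eval_continuous (𝕜 := ℝ) (E := H) (hh.toLp h)).tendsto S |>.comp hlim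
  have h2 : S (hh.toLp h) = ∫ x, hsm.aemeasurable.mk _ x * h x := by
    have : S (hh.toLp h) = inner ℝ G (hh.toLp h) := by
      rw [InnerProductSpace.toDual_symm_apply]; rfl
    rw [this, L2.inner_def]
    apply integral_congr_ae
    filter_upwards [hh.coeFn_toLp, hsm.aemeasurable.ae_eq_mk] with x h1 h2
    rw [← h2, h1]; simp [mul_comm]
  rw [← h2]
  refine h1.congr ?_
  intro k
  rw [← aux_inner (hf (φ k)) hh]
  rfl

lemma weak_compact_fin {n : ℕ} {ι : Type*} [Finite ι] (f : ℕ → ι → RV n → ℝ)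
    (hf : ∀ k i, MemLp (f k i) 2 volume) (M : ℝ)
    (hM : ∀ k i, ∫ x, f k i x * f k i x ≤ M) :
    ∃ φ : ℕ → ℕ, StrictMono φ ∧ ∃ g : ι → RV n → ℝ, ∀ i, Measurable (g i) ∧ MemLp (g i) 2 volume ∧
      ∀ h : RV n → ℝ, MemLp h 2 volume →
        Tendsto (fun k => ∫ x, f (φ k) i x * h x) atTop (𝓝 (∫ x, g i x * h x)) := by
  classical
  have := Fintype.ofFinite ι
  have key : ∀ s : Finset ι, ∃ φ : ℕ → ℕ, StrictMono φ ∧ ∀ i ∈ s, ∃ g : RV n → ℝ,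
      Measurable g ∧ MemLp g 2 volume ∧
      ∀ h : RV n → ℝ, MemLp h 2 volume →
        Tendsto (fun k => ∫ x, f (φ k) i x * h x) atTop (𝓝 (∫ x, g x * h x)) := by
    intro s
    induction s using Finset.induction_on with
    | empty => exact ⟨id, strictMono_id, by simp⟩
    | insert i s _ ih =>
      obtain ⟨φ, hφ, H⟩ := ih
      obtain ⟨ψ, hψ, g, hg1, hg2, hg3⟩ := weak_compact (fun k => f (φ k) i)
        (fun k => hf _ _) M (fun k => hM _ _)
      refine ⟨φ ∘ ψ, hφ.comp hψ, ?_⟩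
      intro j hj
      rcases Finset.mem_insert.1 hj with rfl | hj
      · exact ⟨g, hg1, hg2, hg3⟩
      · obtain ⟨g', h1, h2, h3⟩ := H j hj
        exact ⟨g', h1, h2, fun h hh => (h3 h hh).comp hψ.tendsto_atTop⟩
  obtain ⟨φ, hφ, H⟩ := key Finset.univ
  choose g hg using fun i => H i (Finset.mem_univ i)
  exact ⟨φ, hφ, g, hg⟩

lemma aux_cs {n : ℕ} {f g : RV n → ℝ} (hf : MemLp f 2 volume) (hg : MemLp g 2 volume) :
    |∫ x, f x * g x| ≤ ‖hf.toLp f‖ * ‖hg.toLp g‖ := by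
  rw [← aux_inner hf hg]
  exact abs_real_inner_le_norm _ _

lemma aux_shift_norm {n : ℕ} {f : RV n → ℝ} (hf : MemLp f 2 volume) (e : RV n)
    (hf' : MemLp (fun x => f (x + e)) 2 volume) :
    ‖hf'.toLp _‖ = ‖hf.toLp f‖ := by
  rw [← sq_eq_sq₀ (norm_nonneg _) (norm_nonneg _), aux_norm_sq, aux_norm_sq]
  exact integral_add_right_eq_self (fun x => f x * f x) e

lemma aux_shift_mem {n : ℕ} {f : RV n → ℝ} (hf : MemLp f 2 volume) (e : RV n) :
    MemLp (fun x => f (x + e)) 2 volume :=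
  hf.comp_measurePreserving (measurePreserving_add_right volume e)

lemma aux_deriv {n : ℕ} (u φ : RV n → ℝ) (hui : Integrable u)
    (e : RV n) (hφ : ContDiff ℝ (⊤ : ℕ∞) φ) (hc : HasCompactSupport φ) (t : ℝ) :
    HasDerivAt (fun t : ℝ => ∫ x, u x * φ (x + t • e))
      (∫ x, u x * fderiv ℝ φ (x + t • e) e) t := by
  have hd : Continuous (fderiv ℝ φ) := hφ.continuous_fderiv (by simp)
  have hdc : HasCompactSupport (fderiv ℝ φ) := hc.fderiv ℝ
  obtain ⟨K, hK⟩ := hd.bounded_above_of_compact_support hdc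
  obtain ⟨K0, hK0⟩ := hφ.continuous.bounded_above_of_compact_support hc
  have hφc := hφ.continuous
  refine (hasDerivAt_integral_of_dominated_loc_of_deriv_le (𝕜 := ℝ) (μ := volume)
    (F := fun (t : ℝ) x => u x * φ (x + t • e)) (F' := fun t x => u x * fderiv ℝ φ (x + t • e) e)
    (x₀ := t) (s := Set.univ) (bound := fun x => |u x| * (K * ‖e‖)) Filter.univ_mem ?_ ?_ ?_ ?_ ?_ ?_).2
  · exact Eventually.of_forall fun s => hui.1.mul (by fun_prop : Continuous fun x => φ (x + s • e)).aestronglyMeasurable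
  · refine hui.mul_bdd (c := K0) (by fun_prop : Continuous fun x => φ (x + t • e)).aestronglyMeasurable ?_
    exact Eventually.of_forall fun x => hK0 _
  · exact hui.1.mul (by fun_prop : Continuous fun x => fderiv ℝ φ (x + t • e) e).aestronglyMeasurable
  · refine Eventually.of_forall fun x s _ => ?_
    rw [norm_mul, Real.norm_eq_abs]
    gcongr
    exact (ContinuousLinearMap.le_opNorm _ _).trans (by gcongr; exact hK _)
  · exact hui.abs.mul_const _
  · refine Eventually.of_forall fun x s _ => ?_
    have h1 : HasDerivAt (fun s : ℝ => x + s • e) e s := by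
      simpa using ((hasDerivAt_id s).smul_const e).const_add x
    have h2 : HasFDerivAt φ (fderiv ℝ φ (x + s • e)) (x + s • e) :=
      (hφ.differentiable (by simp) _).hasFDerivAt
    exact (h2.comp_hasDerivAt s h1).const_mul (u x)

lemma poincare {n : ℕ} (Ω : Set (RV n)) (R : ℝ) (hR : ∀ x ∈ Ω, ‖x‖ ≤ R) (hR0 : 0 ≤ R)
    (u w : RV n → ℝ) (hu : MemLp u 2 volume) (hw : MemLp w 2 volume) (hui : Integrable u)
    (huz : ∀ᵐ x ∂(volume : Measure (RV n)), x ∉ Ω → u x = 0) (i : Fin n)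
    (hg : ∀ φ : RV n → ℝ, ContDiff ℝ (⊤ : ℕ∞) φ → HasCompactSupport φ →
      ∫ x, w x * φ x = - ∫ x, u x * fderiv ℝ φ x (Pi.single i 1)) :
    ∫ x, u x * u x ≤ (2 * R + 1) ^ 2 * ∫ x, w x * w x := by
  rw [← aux_norm_sq hu, ← aux_norm_sq hw]
  set e : RV n := Pi.single i 1 with he
  set L : ℝ := 2 * R + 1 with hL
  have hL0 : 0 < L := by positivity
  set U := ‖hu.toLp u‖ with hU
  set W := ‖hw.toLp w‖ with hW
  have hU0 : 0 ≤ U := norm_nonneg _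
  have hW0 : 0 ≤ W := norm_nonneg _
  have main : ∀ ε : ℝ, 0 < ε → U ^ 2 - 2 * U * ε ≤ L * W * (U + ε) := by
    intro ε hε
    obtain ⟨φ, hc, hφ, hap⟩ := MemLp.exist_eLpNorm_sub_le (by norm_num) (by norm_num) hu hε
    have hφm : MemLp φ 2 volume := hφ.continuous.memLp_of_hasCompactSupport hc
    have hdm : MemLp (φ - u) 2 volume := hφm.sub hu
    have hdn : ‖hdm.toLp _‖ ≤ ε := by
      rw [Lp.norm_toLp, eLpNorm_sub_comm]
      exact ENNReal.toReal_le_of_le_ofReal hε.le hap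
    have hφn : ‖hφm.toLp φ‖ ≤ U + ε := by
      have : hφm.toLp φ = hu.toLp u + hdm.toLp (φ - u) := by
        rw [← MemLp.toLp_add]; congr 1; simp
      rw [this]
      exact (norm_add_le _ _).trans (by gcongr)
    -- derivative bound
    have hder := aux_deriv u φ hui e hφ hc
    have hbd : ∀ t : ℝ, ‖∫ x, u x * fderiv ℝ φ (x + t • e) e‖ ≤ W * ‖hφm.toLp φ‖ := by
      intro t
      have hs : MemLp (fun x => φ (x + t • e)) 2 volume := aux_shift_mem hφm _
      have h1 := hg (fun x => φ (x + t • e)) (hφ.comp (contDiff_id.add contDiff_const))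
        (hc.comp_homeomorph (Homeomorph.addRight (t • e)))
      simp only [fderiv_comp_add_right] at h1
      have h2 := aux_cs hw hs
      rw [aux_shift_norm hφm, h1, abs_neg] at h2
      exact h2
    have hmv := Convex.norm_image_sub_le_of_norm_hasDerivWithin_le
      (fun t _ => (hder t).hasDerivWithinAt) (fun t _ => hbd t) (convex_univ) (Set.mem_univ 0)
      (Set.mem_univ L)
    simp only [zero_smul, add_zero, sub_zero, Real.norm_eq_abs, abs_of_pos hL0] at hmv
    have hfL : |∫ x, u x * φ (x + L • e)| ≤ U * ε := by
      have h3 : ∫ x, u x * φ (x + L • e) = ∫ x, u x * (φ - u) (x + L • e) := by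
        apply integral_congr_ae
        have hz := (measurePreserving_add_right (volume : Measure (RV n)) (L • e)).quasiMeasurePreserving.ae huz
        filter_upwards [huz, hz] with x h1 h2
        by_cases hx : x ∈ Ω
        · have : x + L • e ∉ Ω := by
            intro hx2
            have a1 := (norm_le_pi_norm x i).trans (hR x hx)
            have a2 := (norm_le_pi_norm (x + L • e) i).trans (hR _ hx2)
            simp only [he, Pi.add_apply, Pi.smul_apply, Pi.single_eq_same, smul_eq_mul, mul_one, Real.norm_eq_abs] at a1 a2
            rw [abs_le] at a1 a2
            linarith [a1.1, a2.2]
          simp [h2 this]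
        · simp [h1 hx]
      rw [h3]
      have h4 := aux_cs hu (aux_shift_mem hdm (L • e))
      rw [aux_shift_norm hdm] at h4
      exact h4.trans (by gcongr)
    have hf0 : |∫ x, u x * (φ - u) x| ≤ U * ε := (aux_cs hu hdm).trans (by gcongr)
    have hf0' : ∫ x, u x * φ x = U ^ 2 + ∫ x, u x * (φ - u) x := by
      have i1 : Integrable fun x => u x * u x := hu.integrable_mul hu
      have i2 : Integrable fun x => u x * (φ - u) x := hu.integrable_mul hdm
      rw [hU, aux_norm_sq hu, ← integral_add i1 i2]
      congr 1; ext x; simp only [Pi.sub_apply]; ring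
    rw [hf0'] at hmv
    have : W * ‖hφm.toLp φ‖ * L ≤ L * W * (U + ε) := by
      rw [mul_comm, ← mul_assoc]; gcongr
    have b1 := abs_le.1 hmv
    have b2 := abs_le.1 hfL
    have b3 := abs_le.1 hf0
    nlinarith [b1.1, b2.1, b2.2, b3.1]
  have hlim : U ^ 2 ≤ L * W * U := by
    have h1 : Tendsto (fun ε : ℝ => U ^ 2 - 2 * U * ε) (𝓝[>] 0) (𝓝 (U ^ 2 - 2 * U * 0)) :=
      (Continuous.tendsto (by fun_prop) 0).mono_left nhdsWithin_le_nhds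
    have h2 : Tendsto (fun ε : ℝ => L * W * (U + ε)) (𝓝[>] 0) (𝓝 (L * W * (U + 0))) :=
      (Continuous.tendsto (by fun_prop) 0).mono_left nhdsWithin_le_nhds
    have := le_of_tendsto_of_tendsto h1 h2 (by filter_upwards [self_mem_nhdsWithin] with ε hε using main ε hε)
    simpa using this
  rw [← mul_pow]
  rcases hU0.eq_or_lt with h | h
  · rw [← h]; have := sq_nonneg (L * W); simpa using this
  · gcongr
    have : U * U ≤ (L * W) * U := by nlinarith
    exact le_of_mul_le_mul_right this h

lemma mdot_self_nonneg {n : ℕ} (A : Mat n) : 0 ≤ mdot A A :=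
  Finset.sum_nonneg fun i _ => Finset.sum_nonneg fun j _ => mul_self_nonneg _

lemma entry_sq_le {n : ℕ} (A : Mat n) (i j : Fin n) : A i j * A i j ≤ mdot A A := by
  have h1 : A i j * A i j ≤ ∑ j, A i j * A i j :=
    Finset.single_le_sum (f := fun j => A i j * A i j) (fun j _ => mul_self_nonneg _) (Finset.mem_univ j)
  have h2 : ∑ j, A i j * A i j ≤ mdot A A :=
    Finset.single_le_sum (f := fun i => ∑ j, A i j * A i j)
      (fun i _ => Finset.sum_nonneg fun j _ => mul_self_nonneg _) (Finset.mem_univ i)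
  exact h1.trans h2

lemma L2MOn.memLp {n : ℕ} {E : MField n} {s : Set (RV n)} (h : L2MOn E s) (i j : Fin n) :
    MemLp (fun x => E x i j) 2 (volume.restrict s) := by
  rw [memLp_two_iff_integrable_sq (h.1 i j).aestronglyMeasurable]
  refine Integrable.mono' h.2 ((h.1 i j).pow_const 2).aestronglyMeasurable ?_
  refine Eventually.of_forall fun x => ?_
  rw [Real.norm_eq_abs, abs_of_nonneg (sq_nonneg _), sq]
  exact entry_sq_le _ i j

lemma L2VOn.memLp {n : ℕ} {u : VField n} {s : Set (RV n)} (h : L2VOn u s) (i : Fin n) :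
    MemLp (fun x => u x i) 2 (volume.restrict s) := by
  rw [memLp_two_iff_integrable_sq (h.1 i).aestronglyMeasurable]
  refine Integrable.mono' h.2 ((h.1 i).pow_const 2).aestronglyMeasurable ?_
  refine Eventually.of_forall fun x => ?_
  rw [Real.norm_eq_abs, abs_of_nonneg (sq_nonneg _), sq]
  exact Finset.single_le_sum (f := fun i => u x i * u x i) (fun j _ => mul_self_nonneg _) (Finset.mem_univ i)

lemma L2MOn.of_memLp {n : ℕ} {E : MField n} {s : Set (RV n)}
    (hm : ∀ i j, Measurable fun x => E x i j)
    (h : ∀ i j, MemLp (fun x => E x i j) 2 (volume.restrict s)) : L2MOn E s := by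
  refine ⟨hm, ?_⟩
  unfold IntegrableOn mdot
  exact integrable_finsetSum _ fun i _ => integrable_finsetSum _ fun j _ => (h i j).integrable_mul (h i j)

lemma L2VOn.of_memLp {n : ℕ} {u : VField n} {s : Set (RV n)}
    (hm : ∀ i, Measurable fun x => u x i)
    (h : ∀ i, MemLp (fun x => u x i) 2 (volume.restrict s)) : L2VOn u s := by
  refine ⟨hm, ?_⟩
  unfold IntegrableOn
  exact integrable_finsetSum _ fun i _ => (h i).integrable_mul (h i)

/-- scalar weak L2 convergence on the whole space -/
def WC {n : ℕ} (f : ℕ → RV n → ℝ) (g : RV n → ℝ) : Prop :=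
  ∀ h : RV n → ℝ, MemLp h 2 volume →
        Tendsto (fun k => ∫ x, f k x * h x) atTop (𝓝 (∫ x, g x * h x))

lemma WC.indicator {n : ℕ} {f : ℕ → RV n → ℝ} {g : RV n → ℝ} (H : WC f g) {Ω : Set (RV n)}
    (hΩ : MeasurableSet Ω) (hz : ∀ k, ∀ᵐ x ∂(volume : Measure (RV n)), x ∉ Ω → f k x = 0) :
    WC f (Ω.indicator g) := by
  intro h hh
  have h1 := H (Ω.indicator h) (hh.indicator hΩ)
  have e1 : ∫ x, g x * Ω.indicator h x = ∫ x, Ω.indicator g x * h x := by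
    congr 1; ext x; by_cases hx : x ∈ Ω <;> simp [hx]
  rw [← e1]
  refine h1.congr fun k => ?_
  apply integral_congr_ae
  filter_upwards [hz k] with x h2
  by_cases hx : x ∈ Ω
  · simp [hx]
  · simp [hx, h2 hx]

lemma WC.avg {n : ℕ} {f f' : ℕ → RV n → ℝ} {g g' : RV n → ℝ} (H : WC f g) (H' : WC f' g')
    (hg : MemLp g 2 volume) (hg' : MemLp g' 2 volume)
    (hz : ∀ k, ∀ᵐ x ∂(volume : Measure (RV n)), f k x = f' k x) :
    WC f (fun x => (g x + g' x) / 2) := by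
  intro h hh
  have h1 := ((H h hh).add (H' h hh)).div_const 2
  have e1 : ∫ x, (g x + g' x) / 2 * h x = ((∫ x, g x * h x) + ∫ x, g' x * h x) / 2 := by
    have i1 : Integrable fun x => g x * h x := hg.integrable_mul hh
    have i2 : Integrable fun x => g' x * h x := hg'.integrable_mul hh
    rw [← integral_add i1 i2, ← integral_div]
    congr 1; ext x; ring
  rw [e1]
  refine h1.congr fun k => ?_
  have : ∫ x, f' k x * h x = ∫ x, f k x * h x := by
    apply integral_congr_ae
    filter_upwards [hz k] with x h2
    rw [h2]
  rw [this]; ring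

lemma WC.on {n : ℕ} {f : ℕ → RV n → ℝ} {g : RV n → ℝ} (H : WC f g) {Ω : Set (RV n)}
    (hΩ : MeasurableSet Ω) {h : RV n → ℝ} (hh : MemLp h 2 (volume.restrict Ω)) :
    Tendsto (fun k => ∫ x in Ω, f k x * h x) atTop (𝓝 (∫ x in Ω, g x * h x)) := by
  have h1 := H (Ω.indicator h) ((memLp_indicator_iff_restrict hΩ).2 hh)
  have e1 : ∀ g : RV n → ℝ, ∫ x, g x * Ω.indicator h x = ∫ x in Ω, g x * h x := by
    intro g
    rw [← integral_indicator hΩ]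
    congr 1; ext x; by_cases hx : x ∈ Ω <;> simp [hx]
  simpa only [e1] using h1

lemma integrable_of_off {n : ℕ} {Ω : Set (RV n)} (hΩ : MeasurableSet Ω)
    (hfin : volume Ω ≠ ⊤) {u : RV n → ℝ} (hu : MemLp u 2 volume)
    (huz : ∀ᵐ x ∂(volume : Measure (RV n)), x ∉ Ω → u x = 0) : Integrable u := by
  have : IsFiniteMeasure (volume.restrict Ω) := ⟨by simpa using hfin.lt_top⟩
  have h1 : Integrable u (volume.restrict Ω) := hu.restrict Ω |>.integrable (by norm_num)
  have h2 : Integrable (Ω.indicator u) := (integrable_indicator_iff hΩ).2 h1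
  refine h2.congr ?_
  filter_upwards [huz] with x hx
  by_cases h : x ∈ Ω <;> simp [h, hx]

lemma AdmPair.memLp_u {n : ℕ} {Ω : Set (RV n)} (P : AdmPair n Ω) (i : Fin n) :
    MemLp (fun x => P.u x i) 2 volume := by
  have := P.hu.memLp i; rwa [Measure.restrict_univ] at this

lemma AdmPair.memLp_E {n : ℕ} {Ω : Set (RV n)} (P : AdmPair n Ω) (i j : Fin n) :
    MemLp (fun x => P.E x i j) 2 volume := by
  have := P.hE.memLp i j; rwa [Measure.restrict_univ] at this

lemma adm_poincare {n : ℕ} {Ω : Set (RV n)} (hΩo : IsOpen Ω) (hΩb : Bornology.IsBounded Ω) :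
    ∃ K : ℝ, 0 ≤ K ∧ ∀ (P : AdmPair n Ω) (i : Fin n),
      ∫ x, P.u x i * P.u x i ≤ K * ∫ x, mdot (P.E x) (P.E x) := by
  obtain ⟨R, hR0, hR⟩ := hΩb.exists_pos_norm_le
  refine ⟨(2 * R + 1) ^ 2, by positivity, fun P i => ?_⟩
  have h1 := poincare Ω R hR hR0.le (fun x => P.u x i) (fun x => P.E x i i) (P.memLp_u i) (P.memLp_E i i)
    (integrable_of_off hΩo.measurableSet hΩb.measure_lt_top.ne (P.memLp_u i)
      (by filter_upwards [P.huz] with x hx h; simp [hx h]))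
    (by filter_upwards [P.huz] with x hx h; simp [hx h]) i ?_
  · refine h1.trans ?_
    gcongr
    · exact (P.memLp_E i i).integrable_mul (P.memLp_E i i)
    · have := P.hE.2; rwa [integrableOn_univ] at this
    · intro x; exact entry_sq_le _ i i
  · intro φ h1 h2
    rw [P.hgrad i i φ h1 h2]
    have : ∀ x, P.u x i * (fderiv ℝ φ x) (Pi.single i 1) + P.u x i * (fderiv ℝ φ x) (Pi.single i 1)
      = 2 * (P.u x i * (fderiv ℝ φ x) (Pi.single i 1)) := fun x => by ring
    simp only [this]
    rw [integral_const_mul]; ring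

lemma adm_compact {n : ℕ} {Ω : Set (RV n)} (hΩo : IsOpen Ω) (hΩb : Bornology.IsBounded Ω)
    (P : ℕ → AdmPair n Ω) (M : ℝ) (hM : ∀ k, ∫ x, mdot ((P k).E x) ((P k).E x) ≤ M) :
    ∃ φ : ℕ → ℕ, StrictMono φ ∧ ∃ Q : AdmPair n Ω,
      WeakL2V (fun k => (P (φ k)).u) Q.u Ω ∧ WeakL2M (fun k => (P (φ k)).E) Q.E Ω := by
  obtain ⟨K, hK0, hK⟩ := adm_poincare hΩo hΩb
  have hΩ := hΩo.measurableSet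
  let f : ℕ → (Fin n ⊕ (Fin n × Fin n)) → RV n → ℝ := fun k s =>
    Sum.elim (fun i x => (P k).u x i) (fun p x => (P k).E x p.1 p.2) s
  obtain ⟨φ, hφ, g, hg⟩ := weak_compact_fin f (by
      rintro k (i | p)
      · exact (P k).memLp_u i
      · exact (P k).memLp_E p.1 p.2) (max (K * M) M) (by
      rintro k (i | p)
      · refine le_trans ?_ (le_max_left _ _)
        exact (hK (P k) i).trans (by gcongr; exact hM k)
      · refine le_trans ?_ (le_max_right _ _)
        refine le_trans ?_ (hM k)
        refine integral_mono ((P k).memLp_E p.1 p.2 |>.integrable_mul ((P k).memLp_E p.1 p.2)) ?_ ?_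
        · have := (P k).hE.2; rwa [integrableOn_univ] at this
        · intro x; exact entry_sq_le _ _ _)
  let gu : Fin n → RV n → ℝ := fun i => Ω.indicator (g (Sum.inl i))
  let gE : Fin n → Fin n → RV n → ℝ := fun i j =>
    Ω.indicator (fun x => (g (Sum.inr (i, j)) x + g (Sum.inr (j, i)) x) / 2)
  have gum : ∀ i, MemLp (gu i) 2 volume := fun i => (hg _).2.1.indicator hΩ
  have gEm : ∀ i j, MemLp (gE i j) 2 volume := fun i j => by
    refine MemLp.indicator hΩ ?_
    have := ((hg (Sum.inr (i, j))).2.1.add (hg (Sum.inr (j, i))).2.1).const_mul (2⁻¹ : ℝ)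
    refine this.ae_eq (Eventually.of_forall fun x => ?_)
    simp; ring
  have wu : ∀ i, WC (fun k x => (P (φ k)).u x i) (gu i) := fun i =>
    WC.indicator (hg (Sum.inl i)).2.2 hΩ
      (fun k => by filter_upwards [(P (φ k)).huz] with x hx h; simp [f, hx h])
  have wE : ∀ i j, WC (fun k x => (P (φ k)).E x i j) (gE i j) := fun i j =>
    WC.indicator (WC.avg (f' := fun k x => (P (φ k)).E x j i) (hg (Sum.inr (i, j))).2.2 (hg (Sum.inr (j, i))).2.2
      (hg (Sum.inr (i, j))).2.1 (hg (Sum.inr (j, i))).2.1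
        (fun k => by filter_upwards [(P (φ k)).hsym] with x hx; simp [f, hx (Set.mem_univ x) i j])) hΩ
      (fun k => by filter_upwards [(P (φ k)).hEz] with x hx h; simp [f, hx h])
  have mu : ∀ i, Measurable (gu i) := fun i => (hg _).1.indicator hΩ
  have mE : ∀ i j, Measurable (gE i j) := fun i j =>
    (((hg (Sum.inr (i, j))).1.add (hg (Sum.inr (j, i))).1).div_const 2).indicator hΩ
  let Q : AdmPair n Ω :=
    { u := fun x i => gu i x
      E := fun x i j => gE i j x
      hu := L2VOn.of_memLp mu (by simpa [Measure.restrict_univ] using gum)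
      hE := L2MOn.of_memLp mE (by simpa [Measure.restrict_univ] using gEm)
      hsym := Eventually.of_forall fun x _ i j => by
        simp only [gE]
        by_cases hx : x ∈ Ω
        · simp [hx, add_comm]
        · simp [hx]
      huz := Eventually.of_forall fun x hx => by ext i; simp [gu, hx]
      hEz := Eventually.of_forall fun x hx => by ext i j; simp [gE, hx]
      hgrad := by
        intro i j ψ h1 h2
        have hd : ∀ i : Fin n, MemLp (fun x => fderiv ℝ ψ x (Pi.single i 1)) 2 volume := by
          intro i
          have hc : Continuous fun x => fderiv ℝ ψ x (Pi.single i 1) :=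
            (h1.continuous_fderiv (by simp)).clm_apply continuous_const
          exact hc.memLp_of_hasCompactSupport (h2.fderiv_apply ℝ (Pi.single i 1))
        have hm : MemLp ψ 2 volume := h1.continuous.memLp_of_hasCompactSupport h2
        have t1 := wE i j ψ hm
        have t2 := ((wu i _ (hd j)).add (wu j _ (hd i))).const_mul (-(1 / 2) : ℝ)
        have i1 : ∀ i j, Integrable fun x => gu i x * fderiv ℝ ψ x (Pi.single j 1) :=
          fun i j => (gum i).integrable_mul (hd j)
        rw [integral_add (i1 i j) (i1 j i)]
        refine tendsto_nhds_unique t1 (t2.congr fun k => ?_)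
        rw [(P (φ k)).hgrad i j ψ h1 h2, integral_add]
        · exact ((P (φ k)).memLp_u i).integrable_mul (hd j)
        · exact ((P (φ k)).memLp_u j).integrable_mul (hd i) }
  refine ⟨φ, hφ, Q, ?_, ?_⟩
  · intro G hG
    have hsplit : ∀ R : AdmPair n Ω, ∫ x in Ω, ∑ i, R.u x i * G x i = ∑ i, ∫ x in Ω, R.u x i * G x i := by
      intro R
      exact integral_finsetSum _ fun i _ => ((R.memLp_u i).restrict Ω).integrable_mul (hG.memLp i)
    simp only [hsplit]
    exact tendsto_finsetSum _ fun i _ => (wu i).on hΩ (hG.memLp i)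
  · intro G hG
    have hsplit : ∀ R : AdmPair n Ω, ∫ x in Ω, mdot (R.E x) (G x) = ∑ i, ∑ j, ∫ x in Ω, R.E x i j * G x i j := by
      intro R
      have hi : ∀ i j, Integrable (fun x => R.E x i j * G x i j) (volume.restrict Ω) :=
        fun i j => ((R.memLp_E i j).restrict Ω).integrable_mul (hG.memLp i j)
      unfold mdot
      rw [integral_finsetSum _ fun i _ => integrable_finsetSum _ fun j _ => hi i j]
      exact Finset.sum_congr rfl fun i _ => integral_finsetSum _ fun j _ => hi i j
    simp only [hsplit]
    exact tendsto_finsetSum _ fun i _ => tendsto_finsetSum _ fun j _ => (wE i j).on hΩ (hG.memLp i j)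

lemma chi_compact {n : ℕ} {Ω : Set (RV n)} (hΩo : IsOpen Ω) (hΩb : Bornology.IsBounded Ω)
    (χ : ℕ → RV n → ℝ) (hm : ∀ k, Measurable (χ k)) (hχ : ∀ k x, χ k x ∈ Set.Icc (0 : ℝ) 1) :
    ∃ φ : ℕ → ℕ, StrictMono φ ∧ ∃ χ0 : RV n → ℝ, Measurable χ0 ∧ (∀ x, χ0 x ∈ Set.Icc (0 : ℝ) 1) ∧
      WeakStarLinf (fun k => χ (φ k)) χ0 Ω := by
  have hΩ := hΩo.measurableSet
  have hfin : volume Ω ≠ ⊤ := hΩb.measure_lt_top.ne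
  have : IsFiniteMeasure (volume.restrict Ω) := ⟨by simpa using hfin.lt_top⟩
  have habs : ∀ k x, ‖χ k x‖ ≤ 1 := fun k x => by
    rw [Real.norm_eq_abs, abs_of_nonneg (hχ k x).1]; exact (hχ k x).2
  have hmem : ∀ k, MemLp (Ω.indicator (χ k)) 2 volume := fun k => by
    rw [memLp_indicator_iff_restrict hΩ]
    exact MemLp.of_bound (hm k).aestronglyMeasurable 1 (Eventually.of_forall (habs k))
  obtain ⟨φ, hφ, g, hgm, hg2, hg⟩ := weak_compact (fun k => Ω.indicator (χ k)) hmem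
    (∫ x, Ω.indicator (fun _ => (1 : ℝ)) x) (fun k => by
      have i1 : Integrable fun x => Ω.indicator (χ k) x * Ω.indicator (χ k) x :=
        (hmem k).integrable_mul (hmem k)
      have i2 : Integrable fun x => Ω.indicator (fun _ => (1 : ℝ)) x :=
        (integrable_indicator_iff hΩ).2 (integrable_const _)
      refine integral_mono i1 i2 fun x => ?_
      by_cases hx : x ∈ Ω
      · simp only [hx, Set.indicator_of_mem]
        have := hχ k x
        nlinarith [this.1, this.2]
      · simp [hx])
  have hWC : WC (fun k => Ω.indicator (χ (φ k))) g := hg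
  have hon : ∀ h : RV n → ℝ, MemLp h 2 (volume.restrict Ω) →
      Tendsto (fun k => ∫ x in Ω, χ (φ k) x * h x) atTop (𝓝 (∫ x in Ω, g x * h x)) := by
    intro h hh
    refine (hWC.on hΩ hh).congr fun k => ?_
    refine setIntegral_congr_fun hΩ fun x hx => ?_
    simp [hx]
  have hgi : Integrable g (volume.restrict Ω) := (hg2.restrict Ω).integrable (by norm_num)
  have hset : ∀ s : Set (RV n), MeasurableSet s →
      Tendsto (fun k => ∫ x in s, χ (φ k) x ∂(volume.restrict Ω)) atTop
        (𝓝 (∫ x in s, g x ∂(volume.restrict Ω))) := by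
    intro s hs
    have h1 := hon (s.indicator fun _ => 1) ((memLp_const (1 : ℝ)).indicator hs)
    have e : ∀ f : RV n → ℝ, ∫ x in Ω, f x * s.indicator (fun _ => (1 : ℝ)) x
        = ∫ x in s, f x ∂(volume.restrict Ω) := by
      intro f
      rw [← integral_indicator hs]
      congr 1; ext x; by_cases hx : x ∈ s <;> simp [hx]
    simpa only [e] using h1
  have hci : ∀ k, Integrable (χ k) (volume.restrict Ω) := fun k =>
    Integrable.of_bound (hm k).aestronglyMeasurable 1 (Eventually.of_forall (habs k))
  have h0 : 0 ≤ᵐ[volume.restrict Ω] g := by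
    refine ae_nonneg_of_forall_setIntegral_nonneg hgi fun s hs _ => ?_
    exact ge_of_tendsto' (hset s hs) fun k => integral_nonneg fun x => (hχ _ x).1
  have h1 : g ≤ᵐ[volume.restrict Ω] fun _ => (1 : ℝ) := by
    refine ae_le_of_forall_setIntegral_le hgi (integrable_const _) fun s hs _ => ?_
    refine le_of_tendsto' (hset s hs) fun k => ?_
    exact integral_mono (hci _).integrableOn (integrable_const _) fun x => (hχ _ x).2
  let χ0 : RV n → ℝ := fun x => max 0 (min 1 (g x))
  have hχ0m : Measurable χ0 := measurable_const.max (measurable_const.min hgm)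
  have hχ0 : ∀ x, χ0 x ∈ Set.Icc (0 : ℝ) 1 := fun x =>
    ⟨le_max_left _ _, max_le zero_le_one (min_le_left _ _)⟩
  have habs0 : ∀ x, ‖χ0 x‖ ≤ 1 := fun x => by
    rw [Real.norm_eq_abs, abs_of_nonneg (hχ0 x).1]; exact (hχ0 x).2
  have heq : χ0 =ᵐ[volume.restrict Ω] g := by
    filter_upwards [h0, h1] with x a1 a2
    have a1 : 0 ≤ g x := a1
    simp only [χ0]
    rw [min_eq_right a2, max_eq_right a1]
  have hon0 : ∀ h : RV n → ℝ, MemLp h 2 (volume.restrict Ω) →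
      Tendsto (fun k => ∫ x in Ω, χ (φ k) x * h x) atTop (𝓝 (∫ x in Ω, χ0 x * h x)) := by
    intro h hh
    have : ∫ x in Ω, χ0 x * h x = ∫ x in Ω, g x * h x := by
      apply integral_congr_ae
      filter_upwards [heq] with x hx
      rw [hx]
    rw [this]; exact hon h hh
  refine ⟨φ, hφ, χ0, hχ0m, hχ0, ?_⟩
  intro h hh
  rw [Metric.tendsto_atTop]
  intro ε hε
  obtain ⟨ψ, hψc, hψ, hψcont, hψi⟩ := Integrable.exists_hasCompactSupport_integral_sub_le hh
    (show 0 < ε / 4 by positivity)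
  have hψ2 : MemLp ψ 2 (volume.restrict Ω) := hψcont.memLp_of_hasCompactSupport hψc
  obtain ⟨N, hN⟩ := Metric.tendsto_atTop.1 (hon0 ψ hψ2) (ε / 4) (by positivity)
  refine ⟨N, fun k hk => ?_⟩
  have key : ∀ f : RV n → ℝ, Measurable f → (∀ x, ‖f x‖ ≤ 1) →
      |(∫ x in Ω, f x * h x) - ∫ x in Ω, f x * ψ x| ≤ ε / 4 := by
    intro f hf hf1
    have hh' : Integrable h (volume.restrict Ω) := hh
    have i1 : Integrable (fun x => f x * h x) (volume.restrict Ω) :=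
      hh'.bdd_mul hf.aestronglyMeasurable (Eventually.of_forall hf1)
    have i2 : Integrable (fun x => f x * ψ x) (volume.restrict Ω) :=
      hψi.bdd_mul hf.aestronglyMeasurable (Eventually.of_forall hf1)
    rw [← integral_sub i1 i2, ← Real.norm_eq_abs]
    refine le_trans ?_ hψ
    refine norm_integral_le_of_norm_le (g := fun x => ‖h x - ψ x‖) (hh'.sub hψi).norm
      (Eventually.of_forall fun x => ?_)
    rw [← mul_sub, norm_mul]
    exact mul_le_of_le_one_left (norm_nonneg _) (hf1 x)
  have k1 := key _ (hm (φ k)) (habs (φ k))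
  have k2 := key _ hχ0m habs0
  have k3 := hN k hk
  rw [Real.dist_eq] at k3 ⊢
  rw [abs_le] at k1 k2
  rw [abs_lt] at k3 ⊢
  constructor <;> linarith [k1.1, k1.2, k2.1, k2.2, k3.1, k3.2]

/-- weights of the convexified energy -/
def GoodW {n : ℕ} (Ω : Set (RV n)) (p q : RV n → ℝ) (c M : ℝ) : Prop :=
  Measurable p ∧ Measurable q ∧ ∀ᵐ x ∂(volume.restrict Ω),
    0 ≤ p x ∧ 0 ≤ q x ∧ p x ≤ M ∧ q x ≤ M ∧ c ≤ p x + q x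

/-- weighted quadratic density -/
def qd {n : ℕ} (p q : RV n → ℝ) (C D F : MField n) (x : RV n) : ℝ :=
  p x * mdot (F x + C x) (F x + C x) + q x * mdot (F x + D x) (F x + D x)

lemma LinfMOn.l2 {n : ℕ} {Ω : Set (RV n)} (hΩo : IsOpen Ω) (hΩb : Bornology.IsBounded Ω)
    {C : MField n} (hC : LinfMOn C Ω) : L2MOn C Ω := by
  have : IsFiniteMeasure (volume.restrict Ω) := ⟨by simpa using hΩb.measure_lt_top⟩
  obtain ⟨h1, M, hM⟩ := hC
  refine L2MOn.of_memLp h1 fun i j => ?_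
  refine MemLp.of_bound (h1 i j).aestronglyMeasurable M ?_
  rw [ae_restrict_iff' hΩo.measurableSet]
  filter_upwards [hM] with x hx h
  exact hx h i j

lemma L2MOn.add {n : ℕ} {s : Set (RV n)} {E F : MField n} (hE : L2MOn E s) (hF : L2MOn F s) :
    L2MOn (fun x => E x + F x) s :=
  L2MOn.of_memLp (fun i j => (hE.1 i j).add (hF.1 i j))
    (fun i j => (hE.memLp i j).add (hF.memLp i j))

lemma L2MOn.smul {n : ℕ} {s : Set (RV n)} {E : MField n} (hE : L2MOn E s) {p : RV n → ℝ}
    (hp : Measurable p) {M : ℝ} (hM : ∀ᵐ x ∂(volume.restrict s), ‖p x‖ ≤ M) :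
    L2MOn (fun x => p x • E x) s := by
  refine L2MOn.of_memLp (fun i j => hp.mul (hE.1 i j)) fun i j => ?_
  have h1 : MemLp p ⊤ (volume.restrict s) := memLp_top_of_bound hp.aestronglyMeasurable M hM
  exact (hE.memLp i j).mul (r := 2) h1

lemma AdmPair.l2 {n : ℕ} {Ω : Set (RV n)} (P : AdmPair n Ω) : L2MOn P.E Ω :=
  ⟨P.hE.1, P.hE.2.mono_set (Set.subset_univ _)⟩

lemma GoodW.bound_p {n : ℕ} {Ω : Set (RV n)} {p q : RV n → ℝ} {c M : ℝ} (h : GoodW Ω p q c M) :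
    ∀ᵐ x ∂(volume.restrict Ω), ‖p x‖ ≤ M := by
  filter_upwards [h.2.2] with x hx
  rw [Real.norm_eq_abs, abs_of_nonneg hx.1]; exact hx.2.2.1

lemma GoodW.bound_q {n : ℕ} {Ω : Set (RV n)} {p q : RV n → ℝ} {c M : ℝ} (h : GoodW Ω p q c M) :
    ∀ᵐ x ∂(volume.restrict Ω), ‖q x‖ ≤ M := by
  filter_upwards [h.2.2] with x hx
  rw [Real.norm_eq_abs, abs_of_nonneg hx.2.1]; exact hx.2.2.2.1

lemma weighted_integrable {n : ℕ} {Ω : Set (RV n)} {p : RV n → ℝ} {M : ℝ} (hp : Measurable p)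
    (hM : ∀ᵐ x ∂(volume.restrict Ω), ‖p x‖ ≤ M) {F C : MField n} (hF : L2MOn F Ω)
    (hC : L2MOn C Ω) :
    Integrable (fun x => p x * mdot (F x + C x) (F x + C x)) (volume.restrict Ω) :=
  Integrable.bdd_mul (hF.add hC).2 hp.aestronglyMeasurable hM

lemma qd_integrable {n : ℕ} {Ω : Set (RV n)} {p q : RV n → ℝ} {c M : ℝ} (h : GoodW Ω p q c M)
    {C D F : MField n} (hC : L2MOn C Ω) (hD : L2MOn D Ω) (hF : L2MOn F Ω) :
    Integrable (qd p q C D F) (volume.restrict Ω) :=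
  (weighted_integrable h.1 h.bound_p hF hC).add (weighted_integrable h.2.1 h.bound_q hF hD)

lemma mdot_integrable {n : ℕ} {s : Set (RV n)} {E F : MField n} (hE : L2MOn E s) (hF : L2MOn F s) :
    Integrable (fun x => mdot (E x) (F x)) (volume.restrict s) := by
  unfold mdot
  exact integrable_finsetSum _ fun i _ => integrable_finsetSum _ fun j _ =>
    (hE.memLp i j).integrable_mul (hF.memLp i j)

lemma qd_convex {n : ℕ} (p q : ℝ) (hp : 0 ≤ p) (hq : 0 ≤ q) (C D E Q : Mat n) :
    p * mdot (Q + C) (Q + C) + q * mdot (Q + D) (Q + D)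
      + mdot E ((2 * p) • (Q + C) + (2 * q) • (Q + D))
      ≤ p * mdot (E + C) (E + C) + q * mdot (E + D) (E + D)
        + mdot Q ((2 * p) • (Q + C) + (2 * q) • (Q + D)) := by
  simp only [mdot, Finset.mul_sum, ← Finset.sum_add_distrib, Matrix.add_apply, Matrix.smul_apply,
    smul_eq_mul]
  refine Finset.sum_le_sum fun i _ => Finset.sum_le_sum fun j _ => ?_
  nlinarith [mul_nonneg (add_nonneg hp hq) (sq_nonneg (E i j - Q i j))]

lemma qd_coercive {n : ℕ} (p q c M : ℝ) (hp : 0 ≤ p) (hq : 0 ≤ q) (hpM : p ≤ M) (hqM : q ≤ M)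
    (hc : c ≤ p + q) (C D E : Mat n) :
    c / 2 * mdot E E ≤ p * mdot (E + C) (E + C) + q * mdot (E + D) (E + D)
      + (M * mdot C C + M * mdot D D) := by
  simp only [mdot, Finset.mul_sum, ← Finset.sum_add_distrib, Matrix.add_apply]
  refine Finset.sum_le_sum fun i _ => Finset.sum_le_sum fun j _ => ?_
  have h1 := mul_nonneg hp (sq_nonneg (E i j + 2 * C i j))
  have h2 := mul_nonneg hq (sq_nonneg (E i j + 2 * D i j))
  have h3 := mul_nonneg (sub_nonneg.2 hpM) (sq_nonneg (C i j))
  have h4 := mul_nonneg (sub_nonneg.2 hqM) (sq_nonneg (D i j))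
  have h5 := mul_nonneg (sub_nonneg.2 hc) (sq_nonneg (E i j))
  nlinarith

lemma qd_lsc {n : ℕ} {Ω : Set (RV n)} {p q : RV n → ℝ} {c M : ℝ} (h : GoodW Ω p q c M)
    {C D : MField n} (hC : L2MOn C Ω) (hD : L2MOn D Ω) (P : ℕ → AdmPair n Ω) (Q : AdmPair n Ω)
    (hw : WeakL2M (fun k => (P k).E) Q.E Ω) (m : ℝ)
    (hm : Tendsto (fun k => ∫ x in Ω, qd p q C D (P k).E x) atTop (𝓝 m)) :
    ∫ x in Ω, qd p q C D Q.E x ≤ m := by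
  let G : MField n := fun x => (2 * p x) • (Q.E x + C x) + (2 * q x) • (Q.E x + D x)
  have hG : L2MOn G Ω := by
    refine L2MOn.add (E := fun x => (2 * p x) • (Q.E x + C x))
      (F := fun x => (2 * q x) • (Q.E x + D x)) ?_ ?_
    · refine (Q.l2.add hC).smul (h.1.const_mul 2) (M := 2 * M) ?_
      filter_upwards [h.bound_p] with x hx
      rw [norm_mul]; simpa using hx
    · refine (Q.l2.add hD).smul (h.2.1.const_mul 2) (M := 2 * M) ?_
      filter_upwards [h.bound_q] with x hx
      rw [norm_mul]; simpa using hx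
  have key : ∀ k, (∫ x in Ω, qd p q C D Q.E x) + ∫ x in Ω, mdot ((P k).E x) (G x)
      ≤ (∫ x in Ω, qd p q C D (P k).E x) + ∫ x in Ω, mdot (Q.E x) (G x) := by
    intro k
    rw [← integral_add (qd_integrable h hC hD Q.l2) (mdot_integrable (P k).l2 hG),
      ← integral_add (qd_integrable h hC hD (P k).l2) (mdot_integrable Q.l2 hG)]
    refine integral_mono_ae
      ((qd_integrable h hC hD Q.l2).add (mdot_integrable (P k).l2 hG))
      ((qd_integrable h hC hD (P k).l2).add (mdot_integrable Q.l2 hG)) ?_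
    filter_upwards [h.2.2] with x hx
    exact qd_convex (p x) (q x) hx.1 hx.2.1 (C x) (D x) ((P k).E x) (Q.E x)
  have t1 := (tendsto_const_nhds (x := ∫ x in Ω, qd p q C D Q.E x)).add (hw G hG)
  have t2 := hm.add (tendsto_const_nhds (x := ∫ x in Ω, mdot (Q.E x) (G x)))
  have := le_of_tendsto_of_tendsto' t1 t2 key
  linarith

lemma qd_bound {n : ℕ} {Ω : Set (RV n)} (hΩo : IsOpen Ω) {p q : RV n → ℝ} {c M : ℝ} (hc : 0 < c)
    (h : GoodW Ω p q c M)
    {C D : MField n} (hC : L2MOn C Ω) (hD : L2MOn D Ω) (P : AdmPair n Ω) :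
    ∫ x, mdot (P.E x) (P.E x) ≤ 2 / c * ((∫ x in Ω, qd p q C D P.E x)
      + ∫ x in Ω, (M * mdot (C x) (C x) + M * mdot (D x) (D x))) := by
  have e1 : ∫ x, mdot (P.E x) (P.E x) = ∫ x in Ω, mdot (P.E x) (P.E x) := by
    rw [← integral_indicator hΩo.measurableSet]
    apply integral_congr_ae
    filter_upwards [P.hEz] with x hx
    by_cases hxo : x ∈ Ω
    · simp [hxo]
    · simp [hxo, hx hxo, mdot]
  have i1 : Integrable (fun x => M * mdot (C x) (C x) + M * mdot (D x) (D x)) (volume.restrict Ω) :=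
    (hC.2.const_mul M).add (hD.2.const_mul M)
  have h1 : ∫ x in Ω, c / 2 * mdot (P.E x) (P.E x) ≤ ∫ x in Ω, (qd p q C D P.E x
      + (M * mdot (C x) (C x) + M * mdot (D x) (D x))) := by
    refine integral_mono_ae (P.l2.2.const_mul _) ((qd_integrable h hC hD P.l2).add i1) ?_
    filter_upwards [h.2.2] with x hx
    exact qd_coercive (p x) (q x) c M hx.1 hx.2.1 hx.2.2.1 hx.2.2.2.1 hx.2.2.2.2 _ _ _
  rw [integral_const_mul, integral_add (qd_integrable h hC hD P.l2) i1] at h1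
  rw [e1]
  calc _ = 2 / c * (c / 2 * ∫ x in Ω, mdot (P.E x) (P.E x)) := by field_simp
    _ ≤ _ := by gcongr

/-- the zero pair -/
def zeroPair (n : ℕ) (Ω : Set (RV n)) : AdmPair n Ω where
  u := fun _ => 0
  E := fun _ => 0
  hu := ⟨fun _ => measurable_const, by simp⟩
  hE := ⟨fun _ _ => measurable_const, by simp [mdot]⟩
  hsym := by simp [SymOn]
  huz := by simp
  hEz := by simp
  hgrad := by intro i j φ _ _; simp

lemma qd_nonneg {n : ℕ} {Ω : Set (RV n)} {p q : RV n → ℝ} {c M : ℝ} (h : GoodW Ω p q c M)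
    (C D F : MField n) : 0 ≤ ∫ x in Ω, qd p q C D F x := by
  apply integral_nonneg_of_ae
  filter_upwards [h.2.2] with x hx
  exact add_nonneg (mul_nonneg hx.1 (mdot_self_nonneg _)) (mul_nonneg hx.2.1 (mdot_self_nonneg _))

lemma qd_min {n : ℕ} {Ω : Set (RV n)} (hΩo : IsOpen Ω) (hΩb : Bornology.IsBounded Ω)
    {p q : RV n → ℝ} {c M : ℝ} (hc : 0 < c) (h : GoodW Ω p q c M)
    {C D : MField n} (hC : L2MOn C Ω) (hD : L2MOn D Ω) :
    ∃ P : AdmPair n Ω, ∀ W : AdmPair n Ω,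
      ∫ x in Ω, qd p q C D P.E x ≤ ∫ x in Ω, qd p q C D W.E x := by
  let S : Set ℝ := Set.range fun W : AdmPair n Ω => ∫ x in Ω, qd p q C D W.E x
  have hS : S.Nonempty := ⟨_, ⟨zeroPair n Ω, rfl⟩⟩
  have hSb : BddBelow S := ⟨0, by rintro _ ⟨W, rfl⟩; exact qd_nonneg h C D W.E⟩
  obtain ⟨r, _, hr, hrS⟩ := exists_seq_tendsto_sInf hS hSb
  choose P hP using hrS
  have hr' : Tendsto (fun k => ∫ x in Ω, qd p q C D (P k).E x) atTop (𝓝 (sInf S)) :=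
    hr.congr fun k => (hP k).symm
  obtain ⟨B, hB⟩ := hr'.bddAbove_range
  obtain ⟨φ, hφ, Q, _, hQ⟩ := adm_compact hΩo hΩb P _ fun k =>
    (qd_bound hΩo hc h hC hD (P k)).trans
      (mul_le_mul_of_nonneg_left (add_le_add_left (hB ⟨k, rfl⟩) _) (by positivity))
  refine ⟨Q, fun W => ?_⟩
  have h1 := qd_lsc h hC hD (fun k => P (φ k)) Q hQ _ (hr'.comp hφ.tendsto_atTop)
  exact h1.trans (csInf_le hSb ⟨W, rfl⟩)

lemma goodW_chi {n : ℕ} {Ω : Set (RV n)} (hΩo : IsOpen Ω) {δ Ma Mb : ℝ}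
    {a b : RV n → ℝ} (ham : Measurable a) (hbm : Measurable b)
    (ha : ∀ᵐ x ∂(volume : Measure (RV n)), x ∈ Ω → |a x| ≤ Ma)
    (hb : ∀ᵐ x ∂(volume : Measure (RV n)), x ∈ Ω → |b x| ≤ Mb)
    (haδ : ∀ᵐ x ∂(volume : Measure (RV n)), x ∈ Ω → δ ≤ a x)
    (hbδ : ∀ᵐ x ∂(volume : Measure (RV n)), x ∈ Ω → δ ≤ b x) (hδ : 0 < δ)
    {χ : RV n → ℝ} (hm : Measurable χ) (hχ : ∀ x, χ x = 0 ∨ χ x = 1) :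
    GoodW Ω (fun x => 1 / 2 * χ x * a x) (fun x => 1 / 2 * (1 - χ x) * b x) (δ / 2)
      (|Ma| + |Mb|) := by
  refine ⟨(hm.const_mul _).mul ham, ((measurable_const.sub hm).const_mul _).mul hbm, ?_⟩
  rw [ae_restrict_iff' hΩo.measurableSet]
  filter_upwards [ha, hb, haδ, hbδ] with x h1 h2 h3 h4 hx
  have h1 := (le_abs_self _).trans (h1 hx)
  have h2 := (le_abs_self _).trans (h2 hx)
  have h3 := h3 hx
  have h4 := h4 hx
  have := le_abs_self Ma
  have := le_abs_self Mb
  have := abs_nonneg Ma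
  have := abs_nonneg Mb
  rcases hχ x with h | h <;> rw [h] <;> refine ⟨?_, ?_, ?_, ?_, ?_⟩ <;> linarith

/-- Existence of a minimizing sequence of admissible pairs solving the
convexified problems, together with weak limits of the pairs and of the phase
characteristic functions. -/
theorem statement0 {n : ℕ} (Ω : Set (RV n)) (hΩo : IsOpen Ω)
    (hΩb : Bornology.IsBounded Ω)
    (δ : ℝ) (hδ : 0 < δ)
    (a b : RV n → ℝ) (ha : LinfROn a Ω) (hb : LinfROn b Ω)
    (haδ : ∀ᵐ x ∂(volume : Measure (RV n)), x ∈ Ω → δ ≤ a x)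
    (hbδ : ∀ᵐ x ∂(volume : Measure (RV n)), x ∈ Ω → δ ≤ b x)
    (C D : MField n) (hC : LinfMOn C Ω) (hD : LinfMOn D Ω)
    (hCs : SymOn C Ω) (hDs : SymOn D Ω) :
    ∃ (P : ℕ → AdmPair n Ω) (Q : AdmPair n Ω)
      (χak χbk : ℕ → RV n → ℝ) (χa χb : RV n → ℝ),
      (∀ k, Measurable (χak k)) ∧ (∀ k, Measurable (χbk k)) ∧
      (∀ k x, χak k x = 0 ∨ χak k x = 1) ∧
      (∀ k x, χbk k x = 0 ∨ χbk k x = 1) ∧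
      (∀ k, ∀ᵐ x ∂(volume : Measure (RV n)), x ∈ Ω → χak k x + χbk k x = 1) ∧
      Measurable χa ∧ Measurable χb ∧
      (∀ x, χa x ∈ Set.Icc (0:ℝ) 1) ∧ (∀ x, χb x ∈ Set.Icc (0:ℝ) 1) ∧
      (∀ᵐ x ∂(volume : Measure (RV n)), x ∈ Ω → χa x + χb x = 1) ∧
      -- (i) minimizing sequence for the nonconvex problem
      Tendsto (fun k => Jfun Ω a b C D (P k).E) atTop (𝓝 (alphaInf Ω a b C D)) ∧
      -- (ii) weak L² convergence of uᵏ and Eᵏ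
      WeakL2V (fun k => (P k).u) Q.u Ω ∧
      WeakL2M (fun k => (P k).E) Q.E Ω ∧
      -- (iii) weak* convergence of the characteristic functions
      WeakStarLinf χak χa Ω ∧ WeakStarLinf χbk χb Ω ∧
      -- (iv) the convexified energies converge to α
      Tendsto (fun k => Jconv Ω (χak k) (χbk k) a b C D (P k).E) atTop
        (𝓝 (alphaInf Ω a b C D)) ∧
      -- (v) each (uᵏ, Eᵏ) minimizes the k-th convexified energy
      (∀ k, ∀ W : AdmPair n Ω,
        Jconv Ω (χak k) (χbk k) a b C D (P k).E ≤
          Jconv Ω (χak k) (χbk k) a b C D W.E) := by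
  classical
  obtain ⟨ham, Ma, hMa⟩ := ha
  obtain ⟨hbm, Mb, hMb⟩ := hb
  have hC2 := hC.l2 hΩo hΩb
  have hD2 := hD.l2 hΩo hΩb
  have hδ2 : 0 < δ / 2 := by positivity
  -- measurability and integrability of the two densities
  have hpa : ∀ F : MField n, (∀ i j, Measurable fun x => F x i j) → ∀ G : MField n,
      (∀ i j, Measurable fun x => G x i j) → Measurable fun x => mdot (F x + G x) (F x + G x) := by
    intro F hF G hG
    unfold mdot
    exact Finset.measurable_fun_sum _ fun i _ => Finset.measurable_fun_sum _ fun j _ =>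
      ((hF i j).add (hG i j)).mul ((hF i j).add (hG i j))
  have hgood : ∀ χ : RV n → ℝ, Measurable χ → (∀ x, χ x = 0 ∨ χ x = 1) → GoodW Ω
      (fun x => 1 / 2 * χ x * a x) (fun x => 1 / 2 * (1 - χ x) * b x) (δ / 2) (|Ma| + |Mb|) :=
    fun χ hm hχ => goodW_chi hΩo ham hbm hMa hMb haδ hbδ hδ hm hχ
  have hJc : ∀ (χ : RV n → ℝ) (F : MField n), Jconv Ω χ (fun x => 1 - χ x) a b C D F
      = ∫ x in Ω, qd (fun x => 1 / 2 * χ x * a x) (fun x => 1 / 2 * (1 - χ x) * b x) C D F x :=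
    fun χ F => rfl
  have hpm : ∀ P : AdmPair n Ω, Integrable (phaseMin a b C D P.E) (volume.restrict Ω) := by
    intro P
    have h1 := hgood (fun _ => 1) measurable_const (by simp)
    have h0 := hgood (fun _ => 0) measurable_const (by simp)
    have i1 := weighted_integrable h1.1 h1.bound_p P.l2 hC2
    have i0 := weighted_integrable h0.2.1 h0.bound_q P.l2 hD2
    refine (i1.inf i0).congr (Eventually.of_forall fun x => ?_)
    simp [phaseMin]
  have hle : ∀ χ : RV n → ℝ, Measurable χ → (∀ x, χ x = 0 ∨ χ x = 1) → ∀ P : AdmPair n Ω,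
      Jfun Ω a b C D P.E ≤ Jconv Ω χ (fun x => 1 - χ x) a b C D P.E := by
    intro χ hm hχ P
    refine integral_mono (hpm P) (qd_integrable (hgood χ hm hχ) hC2 hD2 P.l2) fun x => ?_
    simp only [phaseMin, qd]
    rcases hχ x with h | h
    · rw [h]; refine (min_le_right _ _).trans (le_of_eq (by ring))
    · rw [h]; refine (min_le_left _ _).trans (le_of_eq (by ring))
  have hJ0 : ∀ P : AdmPair n Ω, 0 ≤ Jfun Ω a b C D P.E := by
    intro P
    apply integral_nonneg_of_ae
    rw [EventuallyLE, ae_restrict_iff' hΩo.measurableSet]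
    filter_upwards [haδ, hbδ] with x h1 h2 hx
    have h1 := h1 hx
    have h2 := h2 hx
    exact le_min (mul_nonneg (by linarith) (mdot_self_nonneg _))
      (mul_nonneg (by linarith) (mdot_self_nonneg _))
  set S : Set ℝ := { r : ℝ | ∃ P : AdmPair n Ω, r = Jfun Ω a b C D P.E } with hS
  have hSne : S.Nonempty := ⟨_, ⟨zeroPair n Ω, rfl⟩⟩
  have hSb : BddBelow S := ⟨0, by rintro _ ⟨W, rfl⟩; exact hJ0 W⟩
  have hα : alphaInf Ω a b C D = sInf S := rfl
  obtain ⟨r, _, hr, hrS⟩ := exists_seq_tendsto_sInf hSne hSb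
  choose W hW using hrS
  -- phase indicators of the minimizing sequence
  let χ : ℕ → RV n → ℝ := fun k x =>
    if 1 / 2 * a x * mdot ((W k).E x + C x) ((W k).E x + C x)
      ≤ 1 / 2 * b x * mdot ((W k).E x + D x) ((W k).E x + D x) then 1 else 0
  have hχm : ∀ k, Measurable (χ k) := by
    intro k
    refine Measurable.ite (measurableSet_le ?_ ?_) measurable_const measurable_const
    · exact (ham.const_mul _).mul (hpa _ (W k).hE.1 _ hC.1)
    · exact (hbm.const_mul _).mul (hpa _ (W k).hE.1 _ hD.1)
  have hχ01 : ∀ k x, χ k x = 0 ∨ χ k x = 1 := by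
    intro k x
    by_cases h : 1 / 2 * a x * mdot ((W k).E x + C x) ((W k).E x + C x)
      ≤ 1 / 2 * b x * mdot ((W k).E x + D x) ((W k).E x + D x)
    · right; exact if_pos h
    · left; exact if_neg h
  have hWeq : ∀ k, Jconv Ω (χ k) (fun x => 1 - χ k x) a b C D (W k).E
      = Jfun Ω a b C D (W k).E := by
    intro k
    unfold Jconv Jfun
    congr 1
    ext x
    simp only [phaseMin]
    by_cases h : 1 / 2 * a x * mdot ((W k).E x + C x) ((W k).E x + C x)
      ≤ 1 / 2 * b x * mdot ((W k).E x + D x) ((W k).E x + D x)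
    · have : χ k x = 1 := if_pos h
      rw [this, min_eq_left h]; ring
    · have : χ k x = 0 := if_neg h
      rw [this, min_eq_right (not_le.1 h).le]; ring
  choose P hP using fun k => qd_min hΩo hΩb hδ2 (hgood (χ k) (hχm k) (hχ01 k)) hC2 hD2
  have hP' : ∀ k (V : AdmPair n Ω), Jconv Ω (χ k) (fun x => 1 - χ k x) a b C D (P k).E
      ≤ Jconv Ω (χ k) (fun x => 1 - χ k x) a b C D V.E := hP
  have hlow : ∀ k, sInf S ≤ Jfun Ω a b C D (P k).E := fun k => csInf_le hSb ⟨P k, rfl⟩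
  have hup : ∀ k, Jconv Ω (χ k) (fun x => 1 - χ k x) a b C D (P k).E ≤ r k := by
    intro k
    rw [hW k, ← hWeq k]; exact hP' k (W k)
  have hmid : ∀ k, Jfun Ω a b C D (P k).E ≤ Jconv Ω (χ k) (fun x => 1 - χ k x) a b C D (P k).E :=
    fun k => hle _ (hχm k) (hχ01 k) _
  have lim1 : Tendsto (fun k => Jfun Ω a b C D (P k).E) atTop (𝓝 (sInf S)) :=
    tendsto_of_tendsto_of_tendsto_of_le_of_le tendsto_const_nhds hr hlow
      fun k => (hmid k).trans (hup k)
  have lim2 : Tendsto (fun k => Jconv Ω (χ k) (fun x => 1 - χ k x) a b C D (P k).E) atTop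
      (𝓝 (sInf S)) :=
    tendsto_of_tendsto_of_tendsto_of_le_of_le tendsto_const_nhds hr
      (fun k => (hlow k).trans (hmid k)) hup
  obtain ⟨B, hB⟩ := lim2.bddAbove_range
  obtain ⟨φ, hφ, Q, hQu, hQE⟩ := adm_compact hΩo hΩb P _ fun k =>
    (qd_bound hΩo hδ2 (hgood (χ k) (hχm k) (hχ01 k)) hC2 hD2 (P k)).trans
      (mul_le_mul_of_nonneg_left (add_le_add_left (hB ⟨k, rfl⟩) _) (by positivity))
  have hχI : ∀ k x, χ k x ∈ Set.Icc (0 : ℝ) 1 := fun k x => by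
    rcases hχ01 k x with h | h <;> rw [h] <;> simp
  obtain ⟨ψ, hψ, χ0, hχ0m, hχ0I, hχ0⟩ := chi_compact hΩo hΩb (fun k => χ (φ k))
    (fun k => hχm _) (fun k => hχI _)
  have hφψ : Tendsto (fun k => φ (ψ k)) atTop atTop := (hφ.comp hψ).tendsto_atTop
  refine ⟨fun k => P (φ (ψ k)), Q, fun k => χ (φ (ψ k)), fun k x => 1 - χ (φ (ψ k)) x, χ0,
    fun x => 1 - χ0 x, fun k => hχm _, fun k => measurable_const.sub (hχm _), fun k => hχ01 _,
    fun k x => ?_, fun k => Eventually.of_forall fun x _ => by ring, hχ0m,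
    measurable_const.sub hχ0m, hχ0I, fun x => ?_, Eventually.of_forall fun x _ => by ring,
    lim1.comp hφψ, fun g hg => (hQu g hg).comp hψ.tendsto_atTop,
    fun G hG => (hQE G hG).comp hψ.tendsto_atTop, hχ0, ?_, lim2.comp hφψ, fun k V => hP' _ V⟩
  · change 1 - χ (φ (ψ k)) x = 0 ∨ 1 - χ (φ (ψ k)) x = 1
    rcases hχ01 (φ (ψ k)) x with h | h <;> rw [h] <;> simp
  · have := hχ0I x
    exact ⟨by linarith [this.2], by linarith [this.1]⟩
  · intro h hh
    have hsplit : ∀ f : RV n → ℝ, Measurable f → (∀ x, f x ∈ Set.Icc (0 : ℝ) 1) →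
        ∫ x in Ω, (1 - f x) * h x = (∫ x in Ω, h x) - ∫ x in Ω, f x * h x := by
      intro f hf hI
      have i1 : Integrable (fun x => f x * h x) (volume.restrict Ω) :=
        Integrable.bdd_mul (c := 1) hh hf.aestronglyMeasurable (Eventually.of_forall fun x => by
          rw [Real.norm_eq_abs, abs_of_nonneg (hI x).1]; exact (hI x).2)
      rw [← integral_sub hh i1]
      congr 1; ext x; ring
    rw [hsplit _ hχ0m hχ0I]
    refine (tendsto_const_nhds.sub (hχ0 h hh)).congr fun k => ?_
    exact (hsplit _ (hχm _) (hχI _)).symm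
end
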